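/- arXiv:1808.07503 — 2 statements merged into one kernel-verified Lean document; each statement's English description precedes it below -/
import Mathlib

section
/- (Bhatia–Davis inequality for finite samples) Let c_1, …, c_n be real numbers with n ≥ 1, let μ = (1/n) Σ_i c_i be their mean, and suppose m ≤ c_i ≤ M for all i. Then the variance σ² = (1/n) Σ_i (c_i − μ)² satisfies σ² ≤ (M − μ)(μ − m). -/
/-- Bhatia–Davis inequality for finite samples: if `m ≤ c i ≤ M` for all `i`,
`μ` is the mean and `σ²` the variance of `c_1, …, c_n` (with `n ≥ 1`), then
`σ² ≤ (M − μ)(μ − m)`. -/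
theorem bhatia_davis_inequality (n : ℕ) (hn : 1 ≤ n) (c : Fin n → ℝ)
    (m M μ σ2 : ℝ)
    (hμ : μ = (∑ i, c i) / n)
    (hbound : ∀ i, m ≤ c i ∧ c i ≤ M)
    (hσ2 : σ2 = (∑ i, (c i - μ) ^ 2) / n) :
    σ2 ≤ (M - μ) * (μ - m) := by
  have hn0 : (0 : ℝ) < n := by exact_mod_cast hn
  have hsum : ∑ i, c i = μ * n := by rw [hμ]; field_simp
  rw [hσ2, div_le_iff₀ hn0]
  -- Termwise, the right side minus the left side is `(M - c i) * (c i - m) ≥ 0`;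
  -- the part linear in `c i - μ` sums to zero.
  calc ∑ i, (c i - μ) ^ 2
      ≤ ∑ i, ((M - μ) * (μ - m) + (M + m - 2 * μ) * (c i - μ)) := by
        refine Finset.sum_le_sum fun i _ => ?_
        nlinarith [mul_nonneg (sub_nonneg.2 (hbound i).2) (sub_nonneg.2 (hbound i).1)]
    _ = (M - μ) * (μ - m) * n := by
        simp only [Finset.sum_add_distrib, ← Finset.mul_sum, Finset.sum_sub_distrib, hsum]
        simp
        ring
end

section
/- Let m ≤ μ ≤ M be real numbers. Then (M − μ)(μ − m) ≤ (M − m)²/4. Consequently, for real numbers c_1, …, c_n with m ≤ c_i ≤ M for all i, mean μ and variance σ², one has σ² ≤ (M − μ)(μ − m) ≤ (M − m)²/4 (Popoviciu's inequality on variances). -/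
/-!
The bound `(M - μ)(μ - m) ≤ (M - m)²/4` is AM-GM for `M - μ` and `μ - m`. For the variance, expand
`0 ≤ (M - c i)(c i - m)` around `μ`:
`(c i - μ)² ≤ (M - μ)(μ - m) + (M + m - 2μ)(c i - μ)`.
The linear term vanishes on averaging over `i`, since `μ` is the mean.
-/

/-- For `m ≤ μ ≤ M`, `(M − μ)(μ − m) ≤ (M − m)²/4`; consequently, for reals
`c_1, …, c_n` bounded between `m` and `M`, with mean `μ` and variance `σ²`,
one has `σ² ≤ (M − μ)(μ − m) ≤ (M − m)²/4` (Popoviciu's inequality). -/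
theorem popoviciu_inequality :
    (∀ m μ M : ℝ, m ≤ μ → μ ≤ M → (M - μ) * (μ - m) ≤ (M - m) ^ 2 / 4) ∧
    (∀ (n : ℕ), 1 ≤ n → ∀ (c : Fin n → ℝ) (m M μ σ2 : ℝ),
      (∀ i, m ≤ c i ∧ c i ≤ M) →
      μ = (∑ i, c i) / n →
      σ2 = (∑ i, (c i - μ) ^ 2) / n →
      σ2 ≤ (M - μ) * (μ - m) ∧ (M - μ) * (μ - m) ≤ (M - m) ^ 2 / 4) := by
  have amgm : ∀ m μ M : ℝ, (M - μ) * (μ - m) ≤ (M - m) ^ 2 / 4 := fun m μ M => by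
    nlinarith [sq_nonneg (M + m - 2 * μ)]
  refine ⟨fun m μ M _ _ => amgm m μ M, fun n hn c m M μ σ2 hc hμ hσ => ⟨?_, amgm m μ M⟩⟩
  have hn0 : (0 : ℝ) < n := by exact_mod_cast hn
  have hsum : ∑ i, c i = μ * n := by rw [hμ, div_mul_cancel₀ _ hn0.ne']
  rw [hσ, div_le_iff₀ hn0]
  calc ∑ i, (c i - μ) ^ 2
      ≤ ∑ i, ((M - μ) * (μ - m) + (M + m - 2 * μ) * (c i - μ)) :=
        Finset.sum_le_sum fun i _ => by
          nlinarith [mul_nonneg (sub_nonneg.2 (hc i).2) (sub_nonneg.2 (hc i).1)]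
    _ = (M - μ) * (μ - m) * n := by
        rw [Finset.sum_add_distrib, Finset.sum_const, ← Finset.mul_sum, Finset.sum_sub_distrib,
          hsum]
        simp only [Finset.sum_const, Finset.card_univ, Fintype.card_fin, nsmul_eq_mul]
        ring
end
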